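/- arXiv:2506.03853 — 2 statements merged into one kernel-verified Lean document; each statement's English description precedes it below -/
import Mathlib

section
/- Let S be a star graph with a non-degenerate labeling l_S : V(S) → ℝ≥0. Then the ultrametric space (V(S), d_{l_S}) is separable if and only if the set W_ε = {v ∈ V(S) : l_S(v) ≤ ε} is countable for every ε > 0. -/
open SimpleGraph

/-- For a tree `G` with labeling `l`, the "ultrametric" `d_l`: the maximum of the labels of the
vertices of the unique path joining `u` and `v` (and `0` if `u = v`). -/
noncomputable def treeDist {V : Type*} (G : SimpleGraph V) (hG : G.IsTree) (l : V → NNReal)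
    (u v : V) : NNReal :=
  letI := Classical.decEq V
  if u = v then 0 else ((hG.existsUnique_path u v).choose.support.map l).foldr max 0

/-- A labeling is non-degenerate if `max {l u, l v} > 0` for every edge `{u, v}`. -/
def Nondeg {V : Type*} (G : SimpleGraph V) (l : V → NNReal) : Prop :=
  ∀ u v : V, G.Adj u v → 0 < max (l u) (l v)

/-- A distance function is separable if there is a countable dense subset. -/
def SeparableWith {α : Type*} (d : α → α → NNReal) : Prop :=
  ∃ S : Set α, S.Countable ∧ ∀ x : α, ∀ ε : NNReal, 0 < ε → ∃ s ∈ S, d x s < ε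

/-- A set is bounded if it is contained in a closed ball of positive radius. -/
def BoundedWith {α : Type*} (d : α → α → NNReal) (A : Set α) : Prop :=
  ∃ c : α, ∃ r : NNReal, 0 < r ∧ ∀ x ∈ A, d c x ≤ r

/-- A distance function is locally finite if every bounded set is finite. -/
def LocallyFiniteWith {α : Type*} (d : α → α → NNReal) : Prop :=
  ∀ A : Set α, BoundedWith d A → A.Finite

/-- A graph is a ray if its vertices can be enumerated without repetition as
`x₁, x₂, …` with edges exactly `{xₙ, xₙ₊₁}`. -/
def IsRay {W : Type*} (R : SimpleGraph W) : Prop :=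
  ∃ v : ℕ → W, Function.Bijective v ∧
    ∀ a b : W, R.Adj a b ↔ ∃ n : ℕ, (a = v n ∧ b = v (n + 1)) ∨ (a = v (n + 1) ∧ b = v n)

/-- A tree is a star graph if some vertex `c` (the center) is adjacent to every other vertex. -/
def IsStar {W : Type*} (S : SimpleGraph W) : Prop :=
  S.IsTree ∧ ∃ c : W, ∀ v : W, v ≠ c → S.Adj c v

/-!
On any tree, both conditions amount to countability of the vertex set. For separability, given a
countable dense set `D`, choose a vertex `c` and a walk from `c` to each `s ∈ D`; only countably
many vertices lie on these walks. Let `v ≠ c` be a vertex on none of them and let `w` be the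
neighbor of `v` in the direction of `c`. Each chosen walk avoids `v`, so the path from `v` to any
`s ∈ D` starts with the edge `{v, w}`, and `d_l(v, s) ≥ max (l v) (l w) > 0`. This contradicts the
density of `D`.
-/

theorem countable_iff_forall_countable_setOf_le {α R : Type*} [Semiring R] [PartialOrder R]
    [IsStrictOrderedRing R] [Archimedean R] (f : α → R) :
    Countable α ↔ ∀ ε : R, 0 < ε → {x | f x ≤ ε}.Countable := by
  refine ⟨fun _ _ _ => Set.to_countable _, fun h => ?_⟩
  have sublevels_cover : ⋃ n : ℕ, {x | f x ≤ n + 1} = Set.univ := by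
    refine Set.eq_univ_of_forall fun x => Set.mem_iUnion.2 ?_
    obtain ⟨n, hn⟩ := exists_nat_ge (f x)
    exact ⟨n, hn.trans (le_add_of_nonneg_right zero_le_one)⟩
  rw [← Set.countable_univ_iff, ← sublevels_cover]
  exact Set.countable_iUnion fun n => h (n + 1) n.cast_add_one_pos

theorem separableWith_of_countable {α : Type*} [Countable α] {d : α → α → NNReal}
    (hd : ∀ x, d x x = 0) : SeparableWith d :=
  ⟨Set.univ, Set.countable_univ, fun x _ hε => ⟨x, Set.mem_univ x, (hd x).trans_lt hε⟩⟩

section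

variable {V : Type*} {G : SimpleGraph V}

theorem exists_adj_forall_isPath_mem_support (hG : G.IsAcyclic) {v c : V} (hvc : G.Reachable v c)
    (hne : v ≠ c) :
    ∃ w, G.Adj v w ∧ ∀ (s : V) (q : G.Walk c s), v ∉ q.support →
      ∀ p : G.Walk v s, p.IsPath → w ∈ p.support := by
  classical
  obtain ⟨r, hr⟩ := hvc.exists_isPath
  cases r with
  | nil => exact absurd rfl hne
  | @cons _ w _ hvw r =>
    refine ⟨w, hvw, fun s q hq p hp => ?_⟩
    have append_avoids : v ∉ (r.append q).support := by
      rw [Walk.mem_support_append_iff, not_or]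
      exact ⟨((Walk.cons_isPath_iff hvw r).1 hr).2, hq⟩
    have bypass_avoids : v ∉ (r.append q).bypass.reverse.support := by
      rw [Walk.support_reverse, List.mem_reverse]
      exact fun hv => append_avoids (Walk.support_bypass_subset_support _ hv)
    have hw : w ∈ p.reverse.support :=
      hG.mem_support_of_ne_mem_support_of_adj_of_isPath hp.reverse
        (Walk.bypass_isPath _).reverse hvw bypass_avoids
    rwa [Walk.support_reverse, List.mem_reverse] at hw

variable {l : V → NNReal} (hG : G.IsTree)

theorem treeDist_self (v : V) : treeDist G hG l v v = 0 :=
  if_pos rfl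

theorem le_treeDist_of_forall_isPath_mem_support {u v w : V} (huv : u ≠ v)
    (hw : ∀ p : G.Walk u v, p.IsPath → w ∈ p.support) : l w ≤ treeDist G hG l u v := by
  rw [treeDist, if_neg huv]
  exact List.le_max_of_le' 0
    (List.mem_map_of_mem (hw _ (hG.existsUnique_path u v).choose_spec.1)) le_rfl

theorem exists_pos_forall_le_treeDist (hl : Nondeg G l) {v c : V} (hne : v ≠ c) :
    ∃ ε > 0, ∀ (s : V) (q : G.Walk c s), v ∉ q.support → ε ≤ treeDist G hG l v s := by
  obtain ⟨w, hvw, hw⟩ := exists_adj_forall_isPath_mem_support hG.isAcyclic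
    (hG.connected v c) hne
  refine ⟨max (l v) (l w), hl v w hvw, fun s q hq => ?_⟩
  have hvs : v ≠ s := fun hvs => hq (hvs ▸ q.end_mem_support)
  exact max_le
    (le_treeDist_of_forall_isPath_mem_support hG hvs fun p _ => p.start_mem_support)
    (le_treeDist_of_forall_isPath_mem_support hG hvs (hw s q hq))

theorem countable_of_separableWith_treeDist (hl : Nondeg G l)
    (hsep : SeparableWith (treeDist G hG l)) : Countable V := by
  obtain ⟨D, hD, hdense⟩ := hsep
  obtain ⟨c⟩ := hG.connected.nonempty
  let q (s : V) : G.Walk c s := (hG.connected c s).some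
  have spanned_countable : (insert c (⋃ s ∈ D, {v | v ∈ (q s).support})).Countable :=
    (hD.biUnion fun s _ => (q s).support.finite_toSet.countable).insert c
  refine Set.countable_univ_iff.1 (spanned_countable.mono fun v _ => ?_)
  by_contra hv
  simp only [Set.mem_insert_iff, Set.mem_iUnion, not_or, not_exists] at hv
  obtain ⟨ε, hε, hle⟩ := exists_pos_forall_le_treeDist hG hl hv.1
  obtain ⟨s, hs, hlt⟩ := hdense v ε hε
  exact (hle s (q s) (hv.2 s hs)).not_gt hlt

theorem separableWith_treeDist_iff_countable (hl : Nondeg G l) :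
    SeparableWith (treeDist G hG l) ↔ Countable V :=
  ⟨countable_of_separableWith_treeDist hG hl,
    fun _ => separableWith_of_countable (treeDist_self hG)⟩

end

theorem star_separable_iff_sublevel_countable_general {V : Type*} (G : SimpleGraph V)
    (hG : G.IsTree) (l : V → NNReal) (hl : Nondeg G l) :
    SeparableWith (treeDist G hG l) ↔
      ∀ ε : NNReal, 0 < ε → {v : V | l v ≤ ε}.Countable :=
  (separableWith_treeDist_iff_countable hG hl).trans (countable_iff_forall_countable_setOf_le l)

theorem star_separable_iff_sublevel_countable {V : Type*} (S : SimpleGraph V)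
    (hS : IsStar S) (l : V → NNReal) (hl : Nondeg S l) :
    SeparableWith (treeDist S hS.1 l) ↔
      ∀ ε : NNReal, 0 < ε → {v : V | l v ≤ ε}.Countable :=
  star_separable_iff_sublevel_countable_general S hS.1 l hl
end

section
/- Let R = (v_1, v_2, …, v_n, …) be a ray with a non-degenerate labeling l_R : V(R) → ℝ≥0. Then the ultrametric space (V(R), d_{l_R}) is locally finite if and only if limsup_{n → ∞} l_R(v_n) = ∞. -/
open SimpleGraph

/-!
If the labels are eventually bounded then they are bounded, so the whole infinite vertex set is
contained in one ball. Conversely, a path from `v i` to `v j` passes through every `v k` with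
`i < k ≤ j`; hence a label `l (v k) > r` with `k > i` confines the ball of radius `r` around `v i`
to the finitely many vertices `v j` with `j < k`.
-/

open Filter Set

theorem limsup_coe_eq_top_iff_forall_frequently_lt {ι : Type*} {f : Filter ι} {a : ι → NNReal} :
    f.limsup (fun i => (a i : ENNReal)) = ⊤ ↔ ∀ r : NNReal, ∃ᶠ i in f, r < a i := by
  refine ⟨fun htop r => ?_, fun hfreq => ENNReal.eq_top_of_forall_nnreal_le fun r =>
    le_limsup_of_frequently_le ((hfreq r).mono fun i hi => by exact_mod_cast hi.le)⟩
  have hlt : (r : ENNReal) < f.limsup (fun i => (a i : ENNReal)) := htop ▸ ENNReal.coe_lt_top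
  exact (frequently_lt_of_lt_limsup (by isBoundedDefault) hlt).mono fun i hi => by
    exact_mod_cast hi

section Tree

variable {V : Type*} {G : SimpleGraph V} (hG : G.IsTree) {l : V → NNReal}

theorem treeDist_le_of_forall_le {C : NNReal} (hC : ∀ w, l w ≤ C) (u v : V) :
    treeDist G hG l u v ≤ C := by
  unfold treeDist
  split_ifs
  · exact zero_le
  · exact List.max_le_of_forall_le _ _ (List.forall_mem_map.2 fun w _ => hC w)

theorem le_treeDist_of_mem_support {u v w : V} (huv : u ≠ v) {p : G.Walk u v} (hp : p.IsPath)
    (hw : w ∈ p.support) : l w ≤ treeDist G hG l u v := by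
  have hpath : p = (hG.existsUnique_path u v).choose :=
    (hG.existsUnique_path u v).choose_spec.2 p hp
  rw [treeDist, if_neg huv, ← hpath]
  exact List.le_max_of_le (List.mem_map_of_mem hw) le_rfl

theorem not_bddAbove_range_of_locallyFiniteWith_treeDist [Infinite V]
    (hfin : LocallyFiniteWith (treeDist G hG l)) : ¬ BddAbove (range l) := by
  rintro ⟨C, hC⟩
  have hle : ∀ w, l w ≤ max C 1 := fun w => (hC (mem_range_self w)).trans (le_max_left C 1)
  obtain ⟨c⟩ := hG.connected.nonempty
  exact infinite_univ (hfin univ ⟨c, max C 1, lt_max_of_lt_right one_pos,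
    fun x _ => treeDist_le_of_forall_le hG hle c x⟩)

end Tree

section Ray

variable {V : Type*} {R : SimpleGraph V} {v : ℕ → V}

theorem ray_mem_support_of_lt_of_le (hv : Function.Injective v)
    (hadj : ∀ a b : V, R.Adj a b →
      ∃ n : ℕ, (a = v n ∧ b = v (n + 1)) ∨ (a = v (n + 1) ∧ b = v n))
    {i j k : ℕ} (hik : i < k) (hkj : k ≤ j) (p : R.Walk (v i) (v j)) : v k ∈ p.support := by
  have hj : v j ∉ v '' Iio k := by
    rw [hv.mem_set_image, mem_Iio]
    exact hkj.not_gt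
  obtain ⟨d, hd, hfst, hsnd⟩ :=
    p.exists_boundary_dart (v '' Iio k) (mem_image_of_mem v hik) hj
  have hsnd_eq : d.snd = v k := by
    obtain ⟨n, ⟨ha, hb⟩ | ⟨ha, hb⟩⟩ := hadj _ _ d.adj <;>
      rw [ha, hv.mem_set_image, mem_Iio] at hfst <;>
      rw [hb, hv.mem_set_image, mem_Iio] at hsnd
    · rw [hb, show n + 1 = k by lia]
    · lia
  exact hsnd_eq ▸ p.dart_snd_mem_support_of_mem_darts hd

theorem ray_le_treeDist_of_lt_of_le (hv : Function.Injective v)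
    (hadj : ∀ a b : V, R.Adj a b →
      ∃ n : ℕ, (a = v n ∧ b = v (n + 1)) ∨ (a = v (n + 1) ∧ b = v n))
    (hR : R.IsTree) (l : V → NNReal) {i j k : ℕ} (hik : i < k) (hkj : k ≤ j) :
    l (v k) ≤ treeDist R hR l (v i) (v j) := by
  obtain ⟨p, hp, -⟩ := hR.existsUnique_path (v i) (v j)
  exact le_treeDist_of_mem_support hR (hv.ne (hik.trans_le hkj).ne) hp
    (ray_mem_support_of_lt_of_le hv hadj hik hkj p)

theorem ray_locallyFiniteWith_treeDist_of_forall_frequently_lt (hv : Function.Bijective v)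
    (hadj : ∀ a b : V, R.Adj a b →
      ∃ n : ℕ, (a = v n ∧ b = v (n + 1)) ∨ (a = v (n + 1) ∧ b = v n))
    (hR : R.IsTree) {l : V → NNReal} (hfreq : ∀ r : NNReal, ∃ᶠ n in atTop, r < l (v n)) :
    LocallyFiniteWith (treeDist R hR l) := by
  rintro A ⟨c, r, -, hA⟩
  obtain ⟨i, rfl⟩ := hv.surjective c
  obtain ⟨k, hik, hrk⟩ := frequently_atTop'.1 (hfreq r) i
  refine ((finite_Iio k).image v).subset fun x hx => ?_
  obtain ⟨j, rfl⟩ := hv.surjective x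
  suffices hjk : j < k from mem_image_of_mem v hjk
  by_contra! hkj
  have hle : l (v k) ≤ r :=
    (ray_le_treeDist_of_lt_of_le hv.injective hadj hR l hik hkj).trans (hA _ hx)
  exact hrk.not_ge hle

end Ray

theorem ray_locallyFinite_iff_limsup_top_general {V : Type*} (R : SimpleGraph V) (v : ℕ → V)
    (hv : Function.Bijective v)
    (hadj : ∀ a b : V, R.Adj a b ↔
      ∃ n : ℕ, (a = v n ∧ b = v (n + 1)) ∨ (a = v (n + 1) ∧ b = v n))
    (hR : R.IsTree) (l : V → NNReal) :
    LocallyFiniteWith (treeDist R hR l) ↔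
      Filter.atTop.limsup (fun n : ℕ => (l (v n) : ENNReal)) = ⊤ := by
  rw [limsup_coe_eq_top_iff_forall_frequently_lt]
  refine ⟨fun hfin r => ?_, ray_locallyFiniteWith_treeDist_of_forall_frequently_lt hv
    (fun a b => (hadj a b).1) hR⟩
  have : Infinite V := Infinite.of_injective v hv.injective
  by_contra hnot
  have hbdd : IsBoundedUnder (· ≤ ·) atTop (l ∘ v) :=
    ⟨r, eventually_map.2 ((not_frequently.1 hnot).mono fun _ => le_of_not_gt)⟩
  apply not_bddAbove_range_of_locallyFiniteWith_treeDist hR hfin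
  exact hv.surjective.range_comp l ▸ hbdd.bddAbove_range

theorem ray_locallyFinite_iff_limsup_top {V : Type*} (R : SimpleGraph V) (v : ℕ → V)
    (hv : Function.Bijective v)
    (hadj : ∀ a b : V, R.Adj a b ↔
      ∃ n : ℕ, (a = v n ∧ b = v (n + 1)) ∨ (a = v (n + 1) ∧ b = v n))
    (hR : R.IsTree) (l : V → NNReal) (hl : Nondeg R l) :
    LocallyFiniteWith (treeDist R hR l) ↔
      Filter.atTop.limsup (fun n : ℕ => (l (v n) : ENNReal)) = ⊤ :=
  ray_locallyFinite_iff_limsup_top_general R v hv hadj hR l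
end
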